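/- For every complex w with Re(w) + |Im(w)| ≥ -1/2, one has |log(1+w) - w + w²/2| ≤ (3/4)|w|², where log denotes the principal branch. -/

import Mathlib

/-!
Write `N w = log (1 + w) - w + w ^ 2 / 2`, so that `N' w = w ^ 2 / (1 + w)` and `N 0 = 0`. By
conjugation symmetry one may assume `0 ≤ Im w`.

If `‖z‖ ≤ 3 / 2 * ‖1 + z‖` for every `z` on the segment from `0` to `w`, then along that segment
the speed of `N` is at most the derivative of `3 / 4 * ‖z‖ ^ 2`, which gives the bound at `w`
(`ray_bound`). The condition says that the segment avoids the open disc with centre `-9 / 5` and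
radius `6 / 5`. This is so if `-3 / 5 ≤ Re w`, and also if `9 / 10 * |Re w| ≤ |Im w|`, because the
tangents from `0` to the disc have slope `±2 / √5` (`right_bound`, `steep_bound`).

What remains is a bounded triangle, away from `0`, cut off by the lines `Re w = -3 / 5`,
`Im w = -9 / 10 * Re w` and `Re w + Im w = -1 / 2`. On it `N w / w ^ 2` is holomorphic, so by the
maximum principle it is enough to bound it on the three sides (`triangle_bound`). The first two
sides are covered by the segment argument. On the third, `w = -1 / 2 - t + t * I` with
`1 / 10 ≤ t`, and

* `log (1 + w) = log (1 + x ^ 2) / 2 - 3 / 2 * log 2 + (π / 4 + arctan x) * I` with `x = 4 * t - 1`,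

so the claim is a real inequality in `t` (`line_ineq`). The supremum of `‖N w‖ / ‖w‖ ^ 2` there is
about `0.7223`, which leaves room to bound `log` and `arctan` by linear and quadratic functions of
`t` on finitely many intervals and to check quartic polynomial inequalities.
-/

open Complex

/-! ### Bounds for the arctangent -/

lemma arctan_le_self' {y : ℝ} (hy : 0 ≤ y) : Real.arctan y ≤ y := by
  have h : MonotoneOn (fun y : ℝ => y - Real.arctan y) (Set.Ici 0) := by
    apply monotoneOn_of_hasDerivWithinAt_nonneg (convex_Ici 0) (by fun_prop)
      (f' := fun y => 1 - 1 / (1 + y ^ 2))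
    · intro x _
      exact ((hasDerivAt_id x).sub (Real.hasDerivAt_arctan x)).hasDerivWithinAt
    · intro x _
      rw [sub_nonneg, div_le_one (by positivity)]
      nlinarith [sq_nonneg x]
  have := h (Set.self_mem_Ici) hy hy
  simpa using this

lemma sub_cube_le_arctan {y : ℝ} (hy : 0 ≤ y) : y - y ^ 3 / 3 ≤ Real.arctan y := by
  have h : MonotoneOn (fun y : ℝ => Real.arctan y - (y - y ^ 3 / 3)) (Set.Ici 0) := by
    apply monotoneOn_of_hasDerivWithinAt_nonneg (convex_Ici 0) (by fun_prop)
      (f' := fun y => 1 / (1 + y ^ 2) - (1 - y ^ 2))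
    · intro x _
      have h3 : HasDerivAt (fun y : ℝ => y ^ 3 / 3) (x ^ 2) x := by
        have := (hasDerivAt_pow 3 x).div_const 3
        refine this.congr_deriv ?_
        norm_num
      exact ((Real.hasDerivAt_arctan x).sub ((hasDerivAt_id x).sub h3)).hasDerivWithinAt
    · intro x _
      rw [sub_nonneg, le_div_iff₀ (by positivity)]
      nlinarith [sq_nonneg (x ^ 2)]
  have := h (Set.self_mem_Ici) hy hy
  simpa using this

/-- At `4 * t - 1` the tangent subtraction formula with `π / 4` moves the point `t = 1 / 2` to the
origin, where `arctan` is well approximated by its Taylor polynomials. -/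
lemma arctan_shift {t : ℝ} (ht : 0 < t) :
    Real.arctan (4 * t - 1) = Real.pi / 4 + Real.arctan (1 - 1 / (2 * t)) := by
  rw [← Real.arctan_one, Real.arctan_add]
  · congr 1
    field_simp
    ring
  · have : 0 < 1 / (2 * t) := by positivity
    linarith

/-- Tangent line at `s` to the convex function `1 / (2 * t)`. -/
lemma inv_tangent {s t : ℝ} (hs : 0 < s) (ht : 0 < t) :
    1 / s - t / (2 * s ^ 2) ≤ 1 / (2 * t) := by
  have h : 1 / (2 * t) - (1 / s - t / (2 * s ^ 2)) = (t - s) ^ 2 / (2 * t * s ^ 2) := by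
    field_simp
    ring
  have : 0 ≤ (t - s) ^ 2 / (2 * t * s ^ 2) := by positivity
  linarith

lemma arctan_small {t : ℝ} (ht : 1 / 10 ≤ t) (h : t ≤ 1 / 4) :
    -(Real.pi / 4) ≤ Real.arctan (4 * t - 1) ∧
      Real.arctan (4 * t - 1) ≤ -(0.88 * (1 - 4 * t)) := by
  constructor
  · rw [← Real.arctan_one, ← Real.arctan_neg]
    exact Real.arctan_mono (by linarith)
  · have := sub_cube_le_arctan (y := 1 - 4 * t) (by linarith)
    rw [show 4 * t - 1 = -(1 - 4 * t) by ring, Real.arctan_neg]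
    have h6 : (1 - 4 * t) ^ 2 ≤ 0.36 := by nlinarith
    have : (1 - 4 * t) ^ 3 ≤ 0.36 * (1 - 4 * t) := by
      rw [pow_succ]; exact mul_le_mul_of_nonneg_right h6 (by linarith)
    linarith

/-- The bound `v - v ^ 3 / 3 ≤ arctan v` at `v = 1 / (2 * t) - 1 ≤ 1 / 3`, where the left side is at
least `26 / 27 * v`, combined with the tangent of `1 / (2 * t)` at `t = 0.45`. -/
lemma arctan_mid {t : ℝ} (h : 3 / 8 ≤ t) (h' : t ≤ 1 / 2) :
    Real.arctan (4 * t - 1) ≤ Real.pi / 4 + (2.3777 * t - 1.1769) := by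
  have ht : 0 < t := by linarith
  have hi : 2.2222 - 2.46914 * t ≤ 1 / (2 * t) := by
    refine le_trans ?_ (inv_tangent (s := 0.45) (by norm_num) ht)
    norm_num
    linarith
  rw [arctan_shift ht]
  set v := 1 / (2 * t) - 1 with hv
  have v0 : 0 ≤ v := by
    rw [hv, sub_nonneg, le_div_iff₀ (by positivity)]; linarith
  have v1 : v ≤ 1 / 3 := by
    rw [hv, sub_le_iff_le_add, div_le_iff₀ (by positivity)]; linarith
  have := sub_cube_le_arctan v0
  rw [show 1 - 1 / (2 * t) = -v by rw [hv]; ring, Real.arctan_neg]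
  have h6 : v ^ 2 ≤ 1 / 9 := by nlinarith
  have : v ^ 3 ≤ 1 / 9 * v := by
    rw [pow_succ]; exact mul_le_mul_of_nonneg_right h6 v0
  linarith

/-- The upper bound is `arctan u ≤ u` at `u = 1 - 1 / (2 * t)`, made linear in `t` by the tangent
at `s`. -/
lemma arctan_large {s t : ℝ} (hs : 0 < s) (h : 1 / 2 ≤ t) :
    Real.pi / 4 ≤ Real.arctan (4 * t - 1) ∧
      Real.arctan (4 * t - 1) ≤ Real.pi / 4 + (1 - (1 / s - t / (2 * s ^ 2))) := by
  have ht : 0 < t := by linarith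
  have hi := inv_tangent hs ht
  have hu : 0 ≤ 1 - 1 / (2 * t) := by
    rw [sub_nonneg, div_le_one (by positivity)]; linarith
  constructor
  · rw [← Real.arctan_one]
    exact Real.arctan_mono (by linarith)
  · have := arctan_le_self' hu
    rw [arctan_shift ht]
    linarith

lemma arctan_far {t : ℝ} (h : 4 / 5 ≤ t) : Real.pi / 4 + 0.35 ≤ Real.arctan (4 * t - 1) := by
  have ht : 0 < t := by linarith
  have h1 : (3 / 8 : ℝ) ≤ 1 - 1 / (2 * t) := by
    rw [le_sub_comm, div_le_iff₀ (by positivity)]; linarith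
  have h2 := sub_cube_le_arctan (y := 3 / 8) (by norm_num)
  have h3 := Real.arctan_mono h1
  rw [arctan_shift ht]
  norm_num at h2
  linarith

/-! ### The line `re + im = -1 / 2` -/

/-- The logarithm on the line `re + im = 1 / 2`. -/
lemma log_line (t : ℝ) :
    Complex.log (((1 / 2 - t : ℝ) : ℂ) + (t : ℝ) * I) =
      ((Real.log (1 + (4 * t - 1) ^ 2) / 2 - 3 / 2 * Real.log 2 : ℝ) : ℂ) +
        ((Real.pi / 4 + Real.arctan (4 * t - 1) : ℝ) : ℂ) * I := by
  set x := 4 * t - 1 with hx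
  set θ := Real.pi / 4 + Real.arctan x with hθ
  set L := Real.log (1 + x ^ 2) / 2 - 3 / 2 * Real.log 2 with hL
  have hs : 0 < 1 + x ^ 2 := by positivity
  have hr : Real.exp L = √(1 + x ^ 2) / (2 * √2) := by
    have e1 : √(1 + x ^ 2) = Real.exp (Real.log (1 + x ^ 2) / 2) := by
      rw [Real.exp_half, Real.exp_log hs]
    have e2 : 2 * √2 = Real.exp (Real.log 2 + Real.log 2 / 2) := by
      rw [Real.exp_add, Real.exp_half, Real.exp_log two_pos]
    rw [e1, e2, ← Real.exp_sub]
    congr 1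
    rw [hL]; ring
  have h2 : √2 * √2 = (2 : ℝ) := Real.mul_self_sqrt two_pos.le
  have hq : √(1 + x ^ 2) ≠ 0 := (Real.sqrt_pos.2 hs).ne'
  have hq2 : √2 ≠ (0 : ℝ) := by positivity
  have hc : Real.exp L * Real.cos θ = 1 / 2 - t := by
    rw [hr, hθ, Real.cos_add, Real.cos_arctan, Real.sin_arctan, Real.cos_pi_div_four,
      Real.sin_pi_div_four, hx]
    rw [hx] at hq
    field_simp
    ring
  have hsn : Real.exp L * Real.sin θ = t := by
    rw [hr, hθ, Real.sin_add, Real.cos_arctan, Real.sin_arctan, Real.cos_pi_div_four,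
      Real.sin_pi_div_four, hx]
    rw [hx] at hq
    field_simp
    ring
  have hz : ((1 / 2 - t : ℝ) : ℂ) + (t : ℝ) * I = Complex.exp ((L : ℂ) + (θ : ℂ) * I) := by
    apply Complex.ext
    · rw [Complex.exp_re]
      simp [hc]
    · rw [Complex.exp_im]
      simp [hsn]
  rw [hz, Complex.log_exp]
  · simp
    have := Real.neg_pi_div_two_lt_arctan x
    have := Real.pi_pos
    linarith
  · simp
    have := Real.arctan_lt_pi_div_two x
    have := Real.pi_pos
    linarith

/-- A point of a rectangle lies in a disc centred at the origin once the four corners do. -/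
lemma sq_add_sq_le_of_corners {a b A₀ A₁ B₀ B₁ R : ℝ} (ha₀ : A₀ ≤ a) (ha₁ : a ≤ A₁)
    (hb₀ : B₀ ≤ b) (hb₁ : b ≤ B₁) (h₀₀ : A₀ ^ 2 + B₀ ^ 2 ≤ R) (h₀₁ : A₀ ^ 2 + B₁ ^ 2 ≤ R)
    (h₁₀ : A₁ ^ 2 + B₀ ^ 2 ≤ R) (h₁₁ : A₁ ^ 2 + B₁ ^ 2 ≤ R) : a ^ 2 + b ^ 2 ≤ R := by
  have ha : a ^ 2 ≤ max (A₀ ^ 2) (A₁ ^ 2) := by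
    rcases le_total 0 a with h | h
    · exact le_max_of_le_right (by nlinarith)
    · exact le_max_of_le_left (by nlinarith)
  have hb : b ^ 2 ≤ max (B₀ ^ 2) (B₁ ^ 2) := by
    rcases le_total 0 b with h | h
    · exact le_max_of_le_right (by nlinarith)
    · exact le_max_of_le_left (by nlinarith)
  rcases le_max_iff.1 ha with ha | ha <;> rcases le_max_iff.1 hb with hb | hb <;> linarith

/-- Concavity of `log`, with the tangent taken at `c`. -/
lemma log_le_tangent {s c : ℝ} (hs : 0 < s) (hc : 0 < c) :
    Real.log s ≤ s / c - 1 + Real.log c := by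
  have := Real.log_le_sub_one_of_pos (div_pos hs hc)
  rw [Real.log_div hs.ne' hc.ne'] at this
  linarith

/-- The degree four Bernstein basis of `[l, h]` is nonnegative there. -/
lemma quartic_basis_nonneg {l h t : ℝ} (hl : l ≤ t) (hh : t ≤ h) :
    0 ≤ (h - t) ^ 4 ∧ 0 ≤ (t - l) * (h - t) ^ 3 ∧ 0 ≤ (t - l) ^ 2 * (h - t) ^ 2 ∧
      0 ≤ (t - l) ^ 3 * (h - t) ∧ 0 ≤ (t - l) ^ 4 := by
  have h₁ := sub_nonneg.2 hl
  have h₂ := sub_nonneg.2 hh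
  refine ⟨?_, ?_, ?_, ?_, ?_⟩ <;> positivity

set_option maxHeartbeats 1000000 in
/-- The estimate on the line `re w + im w = -1 / 2`. On each interval the two squared terms are
enclosed between polynomials in `t` by tangents to `log` at `1 + (4 * t - 1) ^ 2 = c` and by the
bounds on `arctan` above; the quartic inequalities at the corners follow by expansion in the basis
of `quartic_basis_nonneg`. -/
lemma line_ineq {t : ℝ} (ht : 1 / 10 ≤ t) :
    (Real.log (1 + (4 * t - 1) ^ 2) / 2 - 3 / 2 * Real.log 2 + 5 / 8 + 3 / 2 * t) ^ 2 +
      (Real.pi / 4 + Real.arctan (4 * t - 1) - 3 / 2 * t - t ^ 2) ^ 2 ≤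
      (3 / 4 * (1 / 4 + t + 2 * t ^ 2)) ^ 2 := by
  have hl₀ : 0.69314 < Real.log 2 := lt_trans (by norm_num) Real.log_two_gt_d9
  have hl₁ : Real.log 2 < 0.69315 := Real.log_two_lt_d9.trans (by norm_num)
  have hl₃ : Real.log 3 < 1.09862 := Real.log_three_lt_d9.trans (by norm_num)
  have hp₀ : 3.1415 < Real.pi := Real.pi_gt_d4
  have hp₁ : Real.pi < 3.1416 := Real.pi_lt_d4
  have ht0 : 0 < t := by linarith
  have hs : 0 < 1 + (4 * t - 1) ^ 2 := by positivity
  have hs1 : 0 ≤ Real.log (1 + (4 * t - 1) ^ 2) := Real.log_nonneg (by nlinarith)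
  have l4 : Real.log 4 = 2 * Real.log 2 := by
    rw [show (4 : ℝ) = 2 ^ 2 by norm_num, Real.log_pow]; norm_num
  have l8 : Real.log 8 = 3 * Real.log 2 := by
    rw [show (8 : ℝ) = 2 ^ 3 by norm_num, Real.log_pow]; norm_num
  have l16 : Real.log 16 = 4 * Real.log 2 := by
    rw [show (16 : ℝ) = 2 ^ 4 by norm_num, Real.log_pow]; norm_num
  have pos (h : 1 / 4 ≤ t) : 0 ≤ Real.arctan (4 * t - 1) := by
    rw [← Real.arctan_zero]; exact Real.arctan_mono (by linarith)
  rcases le_total t 0.15 with h1 | h1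
  · have hl : 0.1 ≤ t := by linarith only [ht]
    obtain ⟨b₀, b₁, b₂, b₃, b₄⟩ := quartic_basis_nonneg hl h1
    refine sq_add_sq_le_of_corners (A₀ := -0.3468 + 3 / 2 * t)
      (A₁ := ((1 + (4 * t - 1) ^ 2) / 1 - 1 + 0) / 2 - 0.41465 + 3 / 2 * t)
      (B₀ := 0 - 3 / 2 * t - t ^ 2)
      (B₁ := -0.0946 + 3.52 * t - 3 / 2 * t - t ^ 2) ?_ ?_ ?_ ?_ ?_ ?_ ?_ ?_
    -- here `1 + (4 * t - 1) ^ 2 ≥ 1.16`, so its logarithm is at least `0.136`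
    · have h2 := Real.one_sub_inv_le_log_of_pos hs
      have h3 : (1 + (4 * t - 1) ^ 2)⁻¹ ≤ 0.864 := by
        rw [inv_le_comm₀ hs (by norm_num)]
        norm_num at h1 ⊢
        nlinarith only [ht, h1]
      linarith only [h2, h3, hl₁]
    · have hc := log_le_tangent hs (c := 1) (by norm_num)
      rw [Real.log_one] at hc
      linarith only [hc, hl₀, hl₁, hl₃]
    · linarith only [hp₀, hp₁, (arctan_small ht (by linarith only [h1])).1]
    · linarith only [hp₀, hp₁, (arctan_small ht (by linarith only [h1])).2]
    all_goals linarith only [b₀, b₁, b₂, b₃, b₄]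
  rcases le_total t 0.25 with h2 | h2
  · obtain ⟨b₀, b₁, b₂, b₃, b₄⟩ := quartic_basis_nonneg h1 h2
    refine sq_add_sq_le_of_corners (A₀ := -0.4148 + 3 / 2 * t)
      (A₁ := ((1 + (4 * t - 1) ^ 2) / 1 - 1 + 0) / 2 - 0.41465 + 3 / 2 * t)
      (B₀ := 0 - 3 / 2 * t - t ^ 2)
      (B₁ := -0.0946 + 3.52 * t - 3 / 2 * t - t ^ 2) ?_ ?_ ?_ ?_ ?_ ?_ ?_ ?_
    · linarith only [hs1, hl₁]
    · have hc := log_le_tangent hs (c := 1) (by norm_num)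
      rw [Real.log_one] at hc
      linarith only [hc, hl₀, hl₁, hl₃]
    · linarith only [hp₀, hp₁, (arctan_small ht (by linarith only [h2])).1]
    · linarith only [hp₀, hp₁, (arctan_small ht (by linarith only [h2])).2]
    all_goals linarith only [b₀, b₁, b₂, b₃, b₄]
  rcases le_total t 0.375 with h3 | h3
  · obtain ⟨b₀, b₁, b₂, b₃, b₄⟩ := quartic_basis_nonneg h2 h3
    refine sq_add_sq_le_of_corners (A₀ := -0.4148 + 3 / 2 * t)
      (A₁ := ((1 + (4 * t - 1) ^ 2) / 1 - 1 + 0) / 2 - 0.41465 + 3 / 2 * t)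
      (B₀ := 0.785 - 3 / 2 * t - t ^ 2)
      (B₁ := 4 * t - 0.2146 - 3 / 2 * t - t ^ 2) ?_ ?_ ?_ ?_ ?_ ?_ ?_ ?_
    · linarith only [hs1, hl₁]
    · have hc := log_le_tangent hs (c := 1) (by norm_num)
      rw [Real.log_one] at hc
      linarith only [hc, hl₀, hl₁, hl₃]
    · linarith only [hp₀, hp₁, pos (by linarith only [h2])]
    · linarith only [hp₀, hp₁, arctan_le_self' (y := 4 * t - 1) (by linarith only [h2])]
    all_goals linarith only [b₀, b₁, b₂, b₃, b₄]
  rcases le_total t 0.4 with h4 | h4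
  · obtain ⟨b₀, b₁, b₂, b₃, b₄⟩ := quartic_basis_nonneg h3 h4
    refine sq_add_sq_le_of_corners (A₀ := -0.4148 + 3 / 2 * t)
      (A₁ := ((1 + (4 * t - 1) ^ 2) / 1 - 1 + 0) / 2 - 0.41465 + 3 / 2 * t)
      (B₀ := 0.785 - 3 / 2 * t - t ^ 2)
      (B₁ := 0.3939 + 2.3777 * t - 3 / 2 * t - t ^ 2) ?_ ?_ ?_ ?_ ?_ ?_ ?_ ?_
    · linarith only [hs1, hl₁]
    · have hc := log_le_tangent hs (c := 1) (by norm_num)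
      rw [Real.log_one] at hc
      linarith only [hc, hl₀, hl₁, hl₃]
    · linarith only [hp₀, hp₁, pos (by linarith only [h3])]
    · linarith only [hp₀, hp₁, arctan_mid (t := t) (by linarith only [h3]) (by linarith only [h4])]
    all_goals linarith only [b₀, b₁, b₂, b₃, b₄]
  rcases le_total t 0.5 with h5 | h5
  · obtain ⟨b₀, b₁, b₂, b₃, b₄⟩ := quartic_basis_nonneg h4 h5
    refine sq_add_sq_le_of_corners (A₀ := -0.4148 + 3 / 2 * t)
      (A₁ := ((1 + (4 * t - 1) ^ 2) / 2 - 1 + 0.69315) / 2 - 0.41465 + 3 / 2 * t)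
      (B₀ := 0.785 - 3 / 2 * t - t ^ 2)
      (B₁ := 0.3939 + 2.3777 * t - 3 / 2 * t - t ^ 2) ?_ ?_ ?_ ?_ ?_ ?_ ?_ ?_
    · linarith only [hs1, hl₁]
    · have hc := log_le_tangent hs (c := 2) (by norm_num)
      linarith only [hc, hl₀, hl₁, hl₃]
    · linarith only [hp₀, hp₁, pos (by linarith only [h4])]
    · linarith only [hp₀, hp₁, arctan_mid (t := t) (by linarith only [h4]) (by linarith only [h5])]
    all_goals linarith only [b₀, b₁, b₂, b₃, b₄]
  rcases le_total t 0.65 with h6 | h6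
  · obtain ⟨b₀, b₁, b₂, b₃, b₄⟩ := quartic_basis_nonneg h5 h6
    refine sq_add_sq_le_of_corners (A₀ := -0.4148 + 3 / 2 * t)
      (A₁ := ((1 + (4 * t - 1) ^ 2) / 3 - 1 + 1.09862) / 2 - 0.41465 + 3 / 2 * t)
      (B₀ := 1.57 - 3 / 2 * t - t ^ 2)
      (B₁ := 0.5708 + 2 * t - 3 / 2 * t - t ^ 2) ?_ ?_ ?_ ?_ ?_ ?_ ?_ ?_
    · linarith only [hs1, hl₁]
    · have hc := log_le_tangent hs (c := 3) (by norm_num)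
      linarith only [hc, hl₀, hl₁, hl₃]
    · linarith only [hp₀, hp₁, (arctan_large (t := t) (s := 1 / 2) (by norm_num) (by linarith only [h5])).1]
    · have := (arctan_large (t := t) (s := 1 / 2) (by norm_num) (by linarith only [h5])).2
      norm_num at this
      linarith only [hp₀, hp₁, this]
    all_goals linarith only [b₀, b₁, b₂, b₃, b₄]
  rcases le_total t 0.8 with h7 | h7
  · obtain ⟨b₀, b₁, b₂, b₃, b₄⟩ := quartic_basis_nonneg h6 h7
    refine sq_add_sq_le_of_corners (A₀ := -0.4148 + 3 / 2 * t)
      (A₁ := ((1 + (4 * t - 1) ^ 2) / 4 - 1 + 2 * 0.69315) / 2 - 0.41465 + 3 / 2 * t)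
      (B₀ := 1.57 - 3 / 2 * t - t ^ 2)
      (B₁ := 1.2375 + 8 / 9 * t - 3 / 2 * t - t ^ 2) ?_ ?_ ?_ ?_ ?_ ?_ ?_ ?_
    · linarith only [hs1, hl₁]
    · have hc := log_le_tangent hs (c := 4) (by norm_num)
      rw [l4] at hc
      linarith only [hc, hl₀, hl₁, hl₃]
    · linarith only [hp₀, hp₁, (arctan_large (t := t) (s := 3 / 4) (by norm_num) (by linarith only [h6])).1]
    · have := (arctan_large (t := t) (s := 3 / 4) (by norm_num) (by linarith only [h6])).2
      norm_num at this
      linarith only [hp₀, hp₁, this]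
    all_goals linarith only [b₀, b₁, b₂, b₃, b₄]
  rcases le_total t 1.1 with h8 | h8
  · obtain ⟨b₀, b₁, b₂, b₃, b₄⟩ := quartic_basis_nonneg h7 h8
    refine sq_add_sq_le_of_corners (A₀ := -0.4148 + 3 / 2 * t)
      (A₁ := ((1 + (4 * t - 1) ^ 2) / 8 - 1 + 3 * 0.69315) / 2 - 0.41465 + 3 / 2 * t)
      (B₀ := 1.92 - 3 / 2 * t - t ^ 2)
      (B₁ := 1.5708 + t / 2 - 3 / 2 * t - t ^ 2) ?_ ?_ ?_ ?_ ?_ ?_ ?_ ?_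
    · linarith only [hs1, hl₁]
    · have hc := log_le_tangent hs (c := 8) (by norm_num)
      rw [l8] at hc
      linarith only [hc, hl₀, hl₁, hl₃]
    · linarith only [hp₀, hp₁, arctan_far (t := t) (by linarith only [h7])]
    · have := (arctan_large (t := t) (s := 1) (by norm_num) (by linarith only [h7])).2
      norm_num at this
      linarith only [hp₀, hp₁, this]
    all_goals linarith only [b₀, b₁, b₂, b₃, b₄]
  rcases le_total t 1.6 with h9 | h9
  · obtain ⟨b₀, b₁, b₂, b₃, b₄⟩ := quartic_basis_nonneg h8 h9
    refine sq_add_sq_le_of_corners (A₀ := -0.4148 + 3 / 2 * t)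
      (A₁ := ((1 + (4 * t - 1) ^ 2) / 16 - 1 + 4 * 0.69315) / 2 - 0.41465 + 3 / 2 * t)
      (B₀ := 1.92 - 3 / 2 * t - t ^ 2)
      (B₁ := 2.3562 - 3 / 2 * t - t ^ 2) ?_ ?_ ?_ ?_ ?_ ?_ ?_ ?_
    · linarith only [hs1, hl₁]
    · have hc := log_le_tangent hs (c := 16) (by norm_num)
      rw [l16] at hc
      linarith only [hc, hl₀, hl₁, hl₃]
    · linarith only [hp₀, hp₁, arctan_far (t := t) (by linarith only [h8])]
    · linarith only [hp₀, hp₁, Real.arctan_lt_pi_div_two (4 * t - 1)]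
    all_goals linarith only [b₀, b₁, b₂, b₃, b₄]

  · have hl := sub_nonneg.2 h9
    refine sq_add_sq_le_of_corners (A₀ := -0.4148 + 3 / 2 * t)
      (A₁ := 2 * t + 0.665)
      (B₀ := 1.92 - 3 / 2 * t - t ^ 2)
      (B₁ := 2.3562 - 3 / 2 * t - t ^ 2) ?_ ?_ ?_ ?_ ?_ ?_ ?_ ?_
    · linarith only [hs1, hl₁]
    -- `t` is unbounded here, so the square inside `log` is replaced by a power of a linear term
    · have h2 : Real.log (1 + (4 * t - 1) ^ 2) ≤ Real.log ((4 * t) ^ 2) :=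
        Real.log_le_log hs (by nlinarith only [h9])
      rw [Real.log_pow] at h2
      have h3 := log_le_tangent (s := 4 * t) (by positivity) (c := 8) (by norm_num)
      rw [l8] at h3
      norm_num at h2
      linarith only [h2, h3, hl₀, hl₁]
    · linarith only [hp₀, hp₁, arctan_far (t := t) (by linarith only [h9])]
    · linarith only [hp₀, hp₁, Real.arctan_lt_pi_div_two (4 * t - 1)]
    all_goals linarith only [hl, pow_nonneg hl 2, pow_nonneg hl 3, pow_nonneg hl 4]

lemma line_bound {t : ℝ} (ht : 1 / 10 ≤ t) {w : ℂ} (hre : w.re = -1 / 2 - t) (him : w.im = t) :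
    ‖Complex.log (1 + w) - w + w ^ 2 / 2‖ ≤ 3 / 4 * ‖w‖ ^ 2 := by
  have hw : 1 + w = ((1 / 2 - t : ℝ) : ℂ) + (t : ℝ) * I := by
    apply Complex.ext
    · simp [hre]; ring
    · simp [him]
  have hn : ‖w‖ ^ 2 = 1 / 4 + t + 2 * t ^ 2 := by
    rw [Complex.sq_norm, normSq_apply, hre, him]; ring
  rw [hn]
  refine (sq_le_sq₀ (norm_nonneg _) (by positivity)).1 ?_
  refine le_trans (le_of_eq ?_) (line_ineq ht)
  rw [Complex.sq_norm, normSq_apply, hw, log_line]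
  generalize Real.log (1 + (4 * t - 1) ^ 2) / 2 - 3 / 2 * Real.log 2 = L
  generalize Real.pi / 4 + Real.arctan (4 * t - 1) = θ
  simp [pow_two, hre, him]
  ring

/-! ### Integration along segments from the origin -/

/-- Integration along the segment `[0, w]`: the derivative `z ^ 2 / (1 + z)` has norm at most
`3 / 2 * ‖z‖` there. -/
lemma ray_bound {w : ℂ} (hs : ∀ s ∈ Set.Icc (0 : ℝ) 1, 1 + (s : ℂ) * w ∈ slitPlane)
    (hr : ∀ s ∈ Set.Icc (0 : ℝ) 1, ‖(s : ℂ) * w‖ ≤ 3 / 2 * ‖1 + (s : ℂ) * w‖) :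
    ‖Complex.log (1 + w) - w + w ^ 2 / 2‖ ≤ 3 / 4 * ‖w‖ ^ 2 := by
  have hd : ∀ s ∈ Set.Icc (0 : ℝ) 1, HasDerivAt
      (fun s : ℝ => Complex.log (1 + (s : ℂ) * w) - (s : ℂ) * w + ((s : ℂ) * w) ^ 2 / 2)
      (((s : ℂ) * w) ^ 2 * w / (1 + (s : ℂ) * w)) s := by
    intro s h
    have h1 : HasDerivAt (fun s : ℝ => (s : ℂ) * w) w s := by
      simpa using (Complex.ofRealCLM.hasDerivAt (x := s)).mul_const w
    have h2 := ((h1.const_add 1).clog_real (hs s h)).sub h1 |>.add ((h1.pow 2).div_const 2)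
    refine h2.congr_deriv ?_
    have := slitPlane_ne_zero (hs s h)
    generalize (s : ℂ) * w = u at *
    rw [eq_div_iff this]
    field_simp
    push_cast
    ring
  have := image_norm_le_of_norm_deriv_right_le_deriv_boundary
    (f := fun s : ℝ => Complex.log (1 + (s : ℂ) * w) - (s : ℂ) * w + ((s : ℂ) * w) ^ 2 / 2)
    (f' := fun s : ℝ => ((s : ℂ) * w) ^ 2 * w / (1 + (s : ℂ) * w))
    (a := 0) (b := 1) (B := fun s => 3 / 4 * ‖w‖ ^ 2 * s ^ 2)
    (B' := fun s => 3 / 2 * ‖w‖ ^ 2 * s)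
    (fun s h => (hd s h).continuousAt.continuousWithinAt)
    (fun s h => (hd s ⟨h.1, h.2.le⟩).hasDerivWithinAt) (by simp)
    (fun s => by
      refine ((hasDerivAt_pow 2 s).const_mul (3 / 4 * ‖w‖ ^ 2)).congr_deriv ?_
      norm_num; ring)
    (fun s h => by
      have h' : s ∈ Set.Icc (0 : ℝ) 1 := ⟨h.1, h.2.le⟩
      have hp : 0 < ‖1 + (s : ℂ) * w‖ := norm_pos_iff.2 (slitPlane_ne_zero (hs s h'))
      have hn : ‖(s : ℂ) * w‖ = s * ‖w‖ := by
        rw [norm_mul, Complex.norm_real, Real.norm_of_nonneg h.1]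
      have hk := hr s h'
      rw [norm_div, norm_mul, norm_pow, div_le_iff₀ hp]
      calc ‖(s : ℂ) * w‖ ^ 2 * ‖w‖ = ‖(s : ℂ) * w‖ * (s * ‖w‖ * ‖w‖) := by rw [hn]; ring
        _ ≤ 3 / 2 * ‖1 + (s : ℂ) * w‖ * (s * ‖w‖ * ‖w‖) := by
          have := h.1
          gcongr
        _ = _ := by ring)
    (Set.right_mem_Icc.2 zero_le_one)
  simpa using this

lemma slitPlane_of_region {w : ℂ} (hw : -1 / 2 ≤ w.re + |w.im|) : 1 + w ∈ slitPlane := by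
  rw [mem_slitPlane_iff]
  by_cases h : w.im = 0
  · left
    rw [h, abs_zero] at hw
    simp
    linarith
  · right
    simpa using h

/-- The quadratic condition is `‖s * w‖ ≤ 3 / 2 * ‖1 + s * w‖`, squared and expanded. -/
lemma ray_bound_of_quadratic {w : ℂ} (hw : -1 / 2 ≤ w.re + |w.im|)
    (h : ∀ s ∈ Set.Icc (0 : ℝ) 1,
      0 ≤ (s * w.re) ^ 2 + (s * w.im) ^ 2 + 3.6 * (s * w.re) + 1.8) :
    ‖Complex.log (1 + w) - w + w ^ 2 / 2‖ ≤ 3 / 4 * ‖w‖ ^ 2 := by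
  refine ray_bound (fun s hs => slitPlane_of_region ?_) (fun s hs => ?_)
  · have : |s * w.im| = s * |w.im| := by rw [abs_mul, abs_of_nonneg hs.1]
    simp [this]
    nlinarith [hs.1, hs.2]
  · refine (sq_le_sq₀ (norm_nonneg _) (by positivity)).1 ?_
    have := h s hs
    rw [mul_pow, Complex.sq_norm, Complex.sq_norm, normSq_apply, normSq_apply]
    simp
    nlinarith

lemma right_bound {w : ℂ} (hw : -1 / 2 ≤ w.re + |w.im|) (h : -0.6 ≤ w.re) :
    ‖Complex.log (1 + w) - w + w ^ 2 / 2‖ ≤ 3 / 4 * ‖w‖ ^ 2 := by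
  refine ray_bound_of_quadratic hw fun s hs => ?_
  -- the quadratic `u ^ 2 + 3.6 * u + 1.8` has roots `-3` and `-0.6`
  have hu : -0.6 ≤ s * w.re := by nlinarith [hs.1, hs.2]
  have : 0 ≤ (s * w.re + 0.6) * (s * w.re + 3) := mul_nonneg (by linarith) (by linarith)
  nlinarith [sq_nonneg (s * w.im)]

lemma steep_bound {w : ℂ} (hw : -1 / 2 ≤ w.re + |w.im|) (h : 0.81 * w.re ^ 2 ≤ w.im ^ 2) :
    ‖Complex.log (1 + w) - w + w ^ 2 / 2‖ ≤ 3 / 4 * ‖w‖ ^ 2 := by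
  refine ray_bound_of_quadratic hw fun s _ => ?_
  have : 0.81 * (s * w.re) ^ 2 ≤ (s * w.im) ^ 2 := by
    nlinarith [mul_le_mul_of_nonneg_left h (sq_nonneg s)]
  nlinarith [sq_nonneg (s * w.re + 1)]

/-! ### The maximum principle on the remaining triangle -/

/-- The open triangle with vertices `-0.6 + 0.1 i`, `-0.6 + 0.54 i` and `-5 + 4.5 i`. -/
def triangle : Set ℂ := {z | z.re < -0.6 ∧ -1 / 2 < z.re + z.im ∧ z.im < -0.9 * z.re}

lemma isOpen_triangle : IsOpen triangle :=
  (isOpen_lt continuous_re continuous_const).inter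
    ((isOpen_lt continuous_const (continuous_re.add continuous_im)).inter
      (isOpen_lt continuous_im (continuous_const.mul continuous_re)))

lemma closure_triangle_subset :
    closure triangle ⊆ {z | z.re ≤ -0.6 ∧ -1 / 2 ≤ z.re + z.im ∧ z.im ≤ -0.9 * z.re} := by
  refine closure_minimal (fun z hz => ⟨hz.1.le, hz.2.1.le, hz.2.2.le⟩) ?_
  exact (isClosed_le continuous_re continuous_const).inter
    ((isClosed_le continuous_const (continuous_re.add continuous_im)).inter
      (isClosed_le continuous_im (continuous_const.mul continuous_re)))

lemma isBounded_triangle : Bornology.IsBounded triangle := by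
  refine (Metric.isBounded_closedBall (x := (0 : ℂ)) (r := 10)).subset fun z hz => ?_
  obtain ⟨h1, h2, h3⟩ := hz
  rw [mem_closedBall_zero_iff]
  refine (Complex.norm_le_abs_re_add_abs_im z).trans ?_
  rw [abs_of_neg (by linarith), abs_of_pos (by linarith)]
  linarith

lemma triangle_bound {w : ℂ} (hw : w ∈ closure triangle) :
    ‖Complex.log (1 + w) - w + w ^ 2 / 2‖ ≤ 3 / 4 * ‖w‖ ^ 2 := by
  have region {z : ℂ} (hz : z ∈ closure triangle) : -1 / 2 ≤ z.re + |z.im| :=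
    (closure_triangle_subset hz).2.1.trans (by linarith [le_abs_self z.im])
  have ne {z : ℂ} (hz : z ∈ closure triangle) : z ≠ 0 := by
    rintro rfl
    have := (closure_triangle_subset hz).1
    norm_num at this
  have quot {z : ℂ} (hz : z ∈ closure triangle) :
      ‖(Complex.log (1 + z) - z + z ^ 2 / 2) / z ^ 2‖ ≤ 3 / 4 ↔
        ‖Complex.log (1 + z) - z + z ^ 2 / 2‖ ≤ 3 / 4 * ‖z‖ ^ 2 := by
    have := norm_pos_iff.2 (ne hz)
    rw [norm_div, norm_pow, div_le_iff₀ (by positivity)]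
  rw [← quot hw]
  refine Complex.norm_le_of_forall_mem_frontier_norm_le
    (f := fun z => (Complex.log (1 + z) - z + z ^ 2 / 2) / z ^ 2) isBounded_triangle
    (DifferentiableOn.diffContOnCl fun z hz => ?_) (fun z hz => ?_) hw
  · have h1 := slitPlane_of_region (region hz)
    have h2 := pow_ne_zero 2 (ne hz)
    have h3 : DifferentiableAt ℂ (fun z : ℂ => Complex.log (1 + z)) z :=
      DifferentiableAt.clog (by fun_prop) h1
    have h4 : DifferentiableAt ℂ (fun z : ℂ => Complex.log (1 + z) - z + z ^ 2 / 2) z := by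
      fun_prop
    have h5 : DifferentiableAt ℂ (fun z : ℂ => z ^ 2) z := by fun_prop
    exact (h4.div h5 h2).differentiableWithinAt
  · have hc := frontier_subset_closure hz
    rw [quot hc]
    have hn : z ∉ triangle := by
      rw [isOpen_triangle.frontier_eq] at hz
      exact hz.2
    obtain ⟨h1, h2, h3⟩ := closure_triangle_subset hc
    rcases h1.eq_or_lt with e1 | l1
    · exact right_bound (region hc) e1.ge
    rcases h3.eq_or_lt with e3 | l3
    · exact steep_bound (region hc) (by rw [e3]; nlinarith)
    rcases h2.eq_or_lt with e2 | l2
    · exact line_bound (t := z.im) (by linarith) (by linarith) rfl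
    · exact absurd ⟨l1, l2, l3⟩ hn

lemma upper_bound {w : ℂ} (hw : -1 / 2 ≤ w.re + |w.im|) (h0 : 0 ≤ w.im) :
    ‖Complex.log (1 + w) - w + w ^ 2 / 2‖ ≤ 3 / 4 * ‖w‖ ^ 2 := by
  rcases le_or_gt (-0.6) w.re with h1 | h1
  · exact right_bound hw h1
  rcases le_or_gt (-0.9 * w.re) w.im with h3 | h3
  · exact steep_bound hw (by nlinarith)
  rw [abs_of_nonneg h0] at hw
  rcases hw.eq_or_lt with e2 | l2
  · exact line_bound (t := w.im) (by linarith) (by linarith) rfl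
  · exact triangle_bound (subset_closure ⟨h1, l2, h3⟩)

/-- For every complex `w` with `Re w + |Im w| ≥ -1/2`,
`|log(1+w) - w + w²/2| ≤ (3/4)|w|²` with the principal branch of `log`. -/
theorem stmt_1 (w : ℂ) (hw : w.re + |w.im| ≥ -1/2) :
    ‖Complex.log (1 + w) - w + w^2 / 2‖ ≤ 3/4 * ‖w‖^2 := by
  rcases le_total 0 w.im with h | h
  · exact upper_bound hw h
  · have hc := upper_bound (w := (starRingEnd ℂ) w) (by simpa using hw) (by simpa using h)
    have hl : Complex.log (1 + (starRingEnd ℂ) w) = (starRingEnd ℂ) (Complex.log (1 + w)) := by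
      rw [← Complex.log_conj _ (mem_slitPlane_iff_arg.1 (slitPlane_of_region hw)).1]
      simp
    have he : Complex.log (1 + (starRingEnd ℂ) w) - (starRingEnd ℂ) w + (starRingEnd ℂ) w ^ 2 / 2 =
        (starRingEnd ℂ) (Complex.log (1 + w) - w + w ^ 2 / 2) := by
      rw [hl]; simp [map_ofNat]
    rwa [he, Complex.norm_conj, Complex.norm_conj] at hc
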